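/- arXiv:1010.1607 — 5 statements merged into one kernel-verified Lean document; each statement's English description precedes it below -/
import Mathlib

section
/- Let a, b, c > 0 with abc = 1 and a ≥ 1/√2, b ≥ 1/√2, c ≥ 1/√2. Let A = (s, 0, 0), B = (a, t, c), C = (0, b, u) be points of ℝ³ with s ∈ [0, a], t ∈ [0, b], u ∈ [0, c] (so A, B, C lie on three pairwise skew edges of the brick [0,a] × [0,b] × [0,c]). If the triangle ABC is equilateral, i.e. dist(A,B) = dist(B,C) = dist(C,A), then its side length satisfies dist(A,B) ≤ √2. -/
/-!
Every triangle with vertices on the three skew edges has a side of length at most `√2`, equilateral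
or not. Let the vertices cut the edges into `x₀ + x₁ = a`, `y₀ + y₁ = b`, `z₀ + z₁ = c`, so that the
squared sides are `x₁² + y₀² + c²`, `y₁² + z₀² + a²`, `z₁² + x₀² + b²`. Moving the vertices along
`(x₀', y₀', z₀') = -(y₀z₀, x₁z₀, x₁y₁)` keeps the first two stationary to first order, and makes the
third one grow at a rate proportional to `x₁y₁z₁ - x₀y₀z₀`. As squared sides are convex, no side
shrinks when `x₀y₀z₀ ≤ x₁y₁z₁`, which a reflection of the brick ensures. The motion ends with a
vertex of the triangle at a corner of the brick, by cyclic symmetry at `x₀ = 0`. If `AB` and `CA`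
are longer than `√2` there, then `y₀` and `z₁` are so large, hence `y₁` and `z₀` so small, that `BC`
is at most `√2`, by polynomial inequalities in `a²`, `b²`, `c²`.
-/

section Inequalities

variable {x y z : ℝ}

lemma four_mul_lt_add_sq {k p q : ℝ} (hp : 0 ≤ p) (hq : 0 ≤ q) (hkp : k < p ^ 2)
    (hkq : k < q ^ 2) : 4 * k < (p + q) ^ 2 := by
  wlog hpq : p ≤ q generalizing p q
  · rw [add_comm]
    exact this hq hp hkq hkp (le_of_not_ge hpq)
  have hmul : p ^ 2 ≤ p * q := by
    rw [sq]
    exact mul_le_mul_of_nonneg_left hpq hp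
  linarith [add_sq p q]

lemma sq_le_add_sq_sub_mul_sqrt {k p q : ℝ} (hp : 0 ≤ p) (hq : 0 ≤ q) (hk : 0 ≤ k)
    (hkp : k ≤ p ^ 2) : q ^ 2 ≤ (p + q) ^ 2 - 2 * ((p + q) * √k) + k := by
  have hsqrt : √k ≤ p := Real.sqrt_le_iff.2 ⟨hp, hkp⟩
  calc q ^ 2 ≤ (p + q - √k) ^ 2 := pow_le_pow_left₀ hq (by linarith) 2
    _ = (p + q) ^ 2 - 2 * ((p + q) * √k) + k := by rw [sub_sq, Real.sq_sqrt hk]; ring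

lemma half_le_sq_of_one_div_sqrt_two_le (h : 1 / √2 ≤ x) : 1 / 2 ≤ x ^ 2 := by
  calc 1 / 2 = (1 / √2) ^ 2 := by rw [div_pow, one_pow, Real.sq_sqrt zero_le_two]
    _ ≤ x ^ 2 := pow_le_pow_left₀ (by positivity) h 2

lemma mul_le_two_of_half_le (hx : 1 / 2 ≤ x) (hyz : 0 ≤ y * z) (h : x * y * z ≤ 1) :
    y * z ≤ 2 := by
  linarith [mul_le_mul_of_nonneg_right hx hyz]

lemma le_four_mul_two_sub_add (hx : 1 / 2 ≤ x) (hz : 1 / 2 ≤ z) (hy : 2 ≤ y)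
    (h : x * y * z ≤ 1) : y ≤ 4 * (2 - x - z) := by
  have hxz_pos : 0 < x * z := mul_pos (by linarith) (by linarith)
  have hxz : x * z ≤ 1 / 2 := by linarith [mul_le_mul_of_nonneg_right hy hxz_pos.le]
  have hcorner : 0 ≤ (x - 1 / 2) * (z - 1 / 2) := mul_nonneg (by linarith) (by linarith)
  have hsum : 0 ≤ (x + z - 1) * (3 / 2 - (x + z)) := mul_nonneg (by linarith) (by linarith)
  have hone : 1 ≤ x * z * (4 * (2 - x - z)) := by
    linarith [mul_nonneg hcorner (by linarith : 0 ≤ 2 - x - z)]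
  exact le_of_mul_le_mul_left (by linarith) hxz_pos

lemma le_or_le_one_of_mul_mul_two_sub_le_one (hz : 1 / 2 ≤ z) (hxz : x * z ≤ 2)
    (hsum : 2 ≤ x + z) (h : x * z * (2 - z) ≤ 1) : x ≤ z ∨ x ≤ 1 := by
  by_contra! hlt
  obtain ⟨hzx, hx⟩ := hlt
  set d := |z - 1|
  have hd_nonneg : 0 ≤ d := abs_nonneg _
  have hd_sq : d ^ 2 = (z - 1) ^ 2 := sq_abs _
  have hd_le : d ≤ 1 / 2 := abs_le.2 ⟨by linarith, by nlinarith⟩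
  have hd_add : 1 + d ≤ x := by
    rcases abs_cases (z - 1) with ⟨habs, -⟩ | ⟨habs, -⟩ <;> linarith
  have hprod : x * (1 - d ^ 2) ≤ 1 :=
    calc x * (1 - d ^ 2) = x * z * (2 - z) := by rw [hd_sq]; ring
      _ ≤ 1 := h
  have hcubic : (1 + d) * (1 - d ^ 2) ≤ 1 :=
    (mul_le_mul_of_nonneg_right hd_add (by nlinarith)).trans hprod
  have hd_zero : d = 0 := by nlinarith
  rw [hd_zero] at hprod
  linarith

lemma mul_add_sq_le_of_le_one (hx : 1 / 2 ≤ x) (hx1 : x ≤ 1) (hxz : x * z ≤ 2)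
    (hsum : 2 ≤ x + z) : x * (x + z) ^ 2 ≤ 8 * (x * z) - 4 := by
  have hz : z ≤ 4 := by nlinarith
  have hquad : 0 ≤ x * ((x + z - 2) * (6 - (x + z))) :=
    mul_nonneg (by linarith) (mul_nonneg (by linarith) (by linarith))
  linarith [mul_nonneg (sub_nonneg.2 hx1) (sub_nonneg.2 hx)]

lemma mul_add_sq_le_of_one_le_of_le (hx1 : 1 ≤ x) (hle : x ≤ z) (hxz : x * z ≤ 2) :
    x * (x + z) ^ 2 ≤ 8 * (x * z) - 4 := by
  have hsum : x + z ≤ 3 := by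
    linarith [mul_nonneg (sub_nonneg.2 hx1) (sub_nonneg.2 (hx1.trans hle))]
  have hquad : 0 ≤ x * ((x + z - 2) * (3 - (x + z))) :=
    mul_nonneg (by linarith) (mul_nonneg (by linarith) (by linarith))
  have hdiff : 0 ≤ x * (z - x) := mul_nonneg (by linarith) (by linarith)
  linarith [mul_nonneg (sub_nonneg.2 hx1) (by linarith : 0 ≤ 2 - x)]

lemma add_sq_le_four_mul_two_sub (hx : 1 / 2 ≤ x) (hy : 1 / 2 ≤ y) (hz : 1 / 2 ≤ z)
    (h : x * y * z ≤ 1) (hxz : 2 ≤ x + z) (hyz : 2 ≤ y + z) :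
    (x + z) ^ 2 ≤ 4 * (z * (2 - y)) := by
  have hxz_nonneg : 0 ≤ x * z := mul_nonneg (by linarith) (by linarith)
  have hxz_le : x * z ≤ 2 := mul_le_two_of_half_le hy hxz_nonneg (by linarith)
  have hkey : x * (x + z) ^ 2 ≤ 8 * (x * z) - 4 := by
    rcases le_total x 1 with hx1 | hx1
    · exact mul_add_sq_le_of_le_one hx hx1 hxz_le hxz
    · have hprod : x * z * (2 - z) ≤ 1 := by
        linarith [mul_le_mul_of_nonneg_left (by linarith : 2 - z ≤ y) hxz_nonneg]
      rcases le_or_le_one_of_mul_mul_two_sub_le_one hz hxz_le hxz hprod with hle | hx1'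
      · exact mul_add_sq_le_of_one_le_of_le hx1 hle hxz_le
      · exact mul_add_sq_le_of_le_one hx hx1' hxz_le hxz
  exact le_of_mul_le_mul_left (by linarith) (by linarith : 0 < x)

lemma one_sub_sq_le_mul_two_sub_add {m : ℝ} (hx : 1 / 2 ≤ x) (hy : 0 ≤ y) (hz : 1 / 2 ≤ z)
    (h : x * y * z ≤ 1) (hyz : 2 ≤ y + z) (hm_sq : m ^ 2 = z * (2 - y)) (hm : 0 ≤ m)
    (hm1 : m ≤ 1) : (1 - m) ^ 2 ≤ y * (2 - x - z) := by
  have hz_pos : 0 < z := by linarith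
  have hyz_le : y * z ≤ 2 := mul_le_two_of_half_le hx (by positivity) h
  have hmz : m ≤ z := by
    refine le_of_sq_le_sq ?_ hz_pos.le
    rw [hm_sq, sq]
    exact mul_le_mul_of_nonneg_left (by linarith) hz_pos.le
  have hgap : 0 ≤ (1 - z) * (2 * z - 1) + 2 * m * (z - m) := by
    rcases le_total z 1 with hz1 | hz1
    · exact add_nonneg (mul_nonneg (by linarith) (by linarith))
        (mul_nonneg (by linarith) (by linarith))
    · have hz_le : 2 * (z - 1) ≤ m ^ 2 := by linarith
      have hm_sq_le : m ^ 2 ≤ m := pow_le_of_le_one hm hm1 two_ne_zero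
      have hlin : (z - 1) * (1 - m) ≤ (z - 1) * 1 :=
        mul_le_mul_of_nonneg_left (by linarith) (by linarith)
      have hfactor : 0 ≤ (1 - m) * (2 * m - (z - 1) * (1 - m)) :=
        mul_nonneg (by linarith) (by linarith)
      linarith [mul_nonneg (sub_nonneg.2 hz1) (sub_nonneg.2 hz_le)]
  have hmul : z * (1 - m) ^ 2 ≤ z * (y * (2 - x - z)) := by
    have hyz_eq : y * z = 2 * z - m ^ 2 := by linarith
    calc z * (1 - m) ^ 2 ≤ (2 * z - m ^ 2) * (2 - z) - 1 := by linarith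
      _ = y * z * (2 - z) - 1 := by rw [hyz_eq]
      _ ≤ z * (y * (2 - x - z)) := by linarith
  exact le_of_mul_le_mul_left hmul hz_pos

lemma exists_nonneg_mul_le_and_mul_eq {ι : Type*} [Finite ι] [Nonempty ι] {f g : ι → ℝ}
    (hf : ∀ i, 0 ≤ f i) (hg : ∀ i, 0 < g i) :
    ∃ l, 0 ≤ l ∧ (∀ i, l * g i ≤ f i) ∧ ∃ i, l * g i = f i := by
  obtain ⟨i, hi⟩ := Finite.exists_min fun j => f j / g j
  exact ⟨f i / g i, div_nonneg (hf i) (hg i).le, fun j => (le_div_iff₀ (hg j)).1 (hi j), i,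
    div_mul_cancel₀ _ (hg i).ne'⟩

end Inequalities

/-- A brick of volume at most `1` with sides at least `1 / √2`, together with a point on each of
three pairwise skew edges, given by the lengths of the two parts into which it cuts its edge. In
terms of the coordinates `A = (s, 0, 0)`, `B = (a, t, c)`, `C = (0, b, u)` of the points,
`(x₀, x₁) = (s, a - s)`, `(y₀, y₁) = (t, b - t)` and `(z₀, z₁) = (c - u, u)`; the order of the last
pair makes the cyclic permutation of the axes a symmetry. -/
structure MarkedBrick where
  (x₀ x₁ y₀ y₁ z₀ z₁ : ℝ)
  x₀_nonneg : 0 ≤ x₀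
  x₁_nonneg : 0 ≤ x₁
  y₀_nonneg : 0 ≤ y₀
  y₁_nonneg : 0 ≤ y₁
  z₀_nonneg : 0 ≤ z₀
  z₁_nonneg : 0 ≤ z₁
  le_x : 1 / √2 ≤ x₀ + x₁
  le_y : 1 / √2 ≤ y₀ + y₁
  le_z : 1 / √2 ≤ z₀ + z₁
  volume_le_one : (x₀ + x₁) * (y₀ + y₁) * (z₀ + z₁) ≤ 1

namespace MarkedBrick

/-- The side of the brick in the first coordinate direction. -/
def a (T : MarkedBrick) : ℝ := T.x₀ + T.x₁

/-- The side of the brick in the second coordinate direction. -/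
def b (T : MarkedBrick) : ℝ := T.y₀ + T.y₁

/-- The side of the brick in the third coordinate direction. -/
def c (T : MarkedBrick) : ℝ := T.z₀ + T.z₁

/-- The squared distance of the marked points on the first and second edges. -/
def sqAB (T : MarkedBrick) : ℝ := T.x₁ ^ 2 + T.y₀ ^ 2 + T.c ^ 2

/-- The squared distance of the marked points on the second and third edges. -/
def sqBC (T : MarkedBrick) : ℝ := T.y₁ ^ 2 + T.z₀ ^ 2 + T.a ^ 2

/-- The squared distance of the marked points on the third and first edges. -/
def sqCA (T : MarkedBrick) : ℝ := T.z₁ ^ 2 + T.x₀ ^ 2 + T.b ^ 2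

/-- The squared length of the shortest side of the triangle of marked points. -/
def minSideSq (T : MarkedBrick) : ℝ := min T.sqAB (min T.sqBC T.sqCA)

/-- The marked brick obtained by the cyclic permutation of the axes. -/
def rotate (T : MarkedBrick) : MarkedBrick where
  x₀ := T.y₀
  x₁ := T.y₁
  y₀ := T.z₀
  y₁ := T.z₁
  z₀ := T.x₀
  z₁ := T.x₁
  x₀_nonneg := T.y₀_nonneg
  x₁_nonneg := T.y₁_nonneg
  y₀_nonneg := T.z₀_nonneg
  y₁_nonneg := T.z₁_nonneg
  z₀_nonneg := T.x₀_nonneg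
  z₁_nonneg := T.x₁_nonneg
  le_x := T.le_y
  le_y := T.le_z
  le_z := T.le_x
  volume_le_one := by linarith [T.volume_le_one]

/-- The marked brick obtained by the symmetry that exchanges the first two marked points; it
reverses the two parts of every edge. -/
def reflect (T : MarkedBrick) : MarkedBrick where
  x₀ := T.y₁
  x₁ := T.y₀
  y₀ := T.x₁
  y₁ := T.x₀
  z₀ := T.z₁
  z₁ := T.z₀
  x₀_nonneg := T.y₁_nonneg
  x₁_nonneg := T.y₀_nonneg
  y₀_nonneg := T.x₁_nonneg
  y₁_nonneg := T.x₀_nonneg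
  z₀_nonneg := T.z₁_nonneg
  z₁_nonneg := T.z₀_nonneg
  le_x := by linarith [T.le_y]
  le_y := by linarith [T.le_x]
  le_z := by linarith [T.le_z]
  volume_le_one := by linarith [T.volume_le_one]

variable (T : MarkedBrick)

lemma minSideSq_rotate : T.rotate.minSideSq = T.minSideSq :=
  (min_assoc _ _ _).symm.trans (min_comm _ _)

lemma minSideSq_reflect : T.reflect.minSideSq = T.minSideSq := by
  have hAB : T.reflect.sqAB = T.sqAB := by simp only [sqAB, c, reflect]; ring
  have hBC : T.reflect.sqBC = T.sqCA := by simp only [sqBC, sqCA, a, b, reflect]; ring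
  have hCA : T.reflect.sqCA = T.sqBC := by simp only [sqBC, sqCA, a, b, reflect]; ring
  rw [minSideSq, hAB, hBC, hCA, min_comm T.sqCA, minSideSq]

lemma half_le_sq_a : 1 / 2 ≤ T.a ^ 2 := half_le_sq_of_one_div_sqrt_two_le T.le_x

lemma half_le_sq_b : 1 / 2 ≤ T.b ^ 2 := half_le_sq_of_one_div_sqrt_two_le T.le_y

lemma half_le_sq_c : 1 / 2 ≤ T.c ^ 2 := half_le_sq_of_one_div_sqrt_two_le T.le_z

lemma b_nonneg : 0 ≤ T.b := add_nonneg T.y₀_nonneg T.y₁_nonneg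

lemma c_nonneg : 0 ≤ T.c := add_nonneg T.z₀_nonneg T.z₁_nonneg

lemma sq_mul_sq_mul_sq_le_one : T.a ^ 2 * T.b ^ 2 * T.c ^ 2 ≤ 1 := by
  have ha : 0 ≤ T.a := add_nonneg T.x₀_nonneg T.x₁_nonneg
  rw [← mul_pow, ← mul_pow]
  exact pow_le_one₀ (mul_nonneg (mul_nonneg ha T.b_nonneg) T.c_nonneg) T.volume_le_one

variable {T}

lemma sqAB_of_x₀_eq_zero (hx₀ : T.x₀ = 0) : T.sqAB = T.a ^ 2 + T.y₀ ^ 2 + T.c ^ 2 := by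
  rw [sqAB, a, hx₀, zero_add]

lemma sqCA_of_x₀_eq_zero (hx₀ : T.x₀ = 0) : T.sqCA = T.z₁ ^ 2 + T.b ^ 2 := by
  rw [sqCA, hx₀]
  ring

lemma sqBC_le_two_of_two_le_sq_b (hx₀ : T.x₀ = 0) (hb : 2 ≤ T.b ^ 2) (hAB : 2 < T.sqAB) :
    T.sqBC ≤ 2 := by
  by_contra! hBC
  rw [sqAB_of_x₀_eq_zero hx₀] at hAB
  have hz₀ : T.z₀ ^ 2 ≤ T.c ^ 2 :=
    pow_le_pow_left₀ T.z₀_nonneg (le_add_of_nonneg_right T.z₁_nonneg) 2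
  have hlt : 4 * (2 - T.a ^ 2 - T.c ^ 2) < T.b ^ 2 :=
    four_mul_lt_add_sq T.y₀_nonneg T.y₁_nonneg (by linarith) (by rw [sqBC] at hBC; linarith)
  exact hlt.not_ge
    (le_four_mul_two_sub_add T.half_le_sq_a T.half_le_sq_c hb T.sq_mul_sq_mul_sq_le_one)

lemma two_le_sq_b_add_sq_c (hx₀ : T.x₀ = 0) (hCA : 2 < T.sqCA) : 2 ≤ T.b ^ 2 + T.c ^ 2 := by
  rw [sqCA_of_x₀_eq_zero hx₀] at hCA
  have hz₁ : T.z₁ ^ 2 ≤ T.c ^ 2 :=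
    pow_le_pow_left₀ T.z₁_nonneg (le_add_of_nonneg_left T.z₀_nonneg) 2
  linarith

lemma sq_z₀_le_of_two_lt_sqCA (hx₀ : T.x₀ = 0) (hb : T.b ^ 2 ≤ 2) (hCA : 2 < T.sqCA) :
    T.z₀ ^ 2 ≤ T.c ^ 2 - 2 * (T.c * √(2 - T.b ^ 2)) + (2 - T.b ^ 2) := by
  rw [sqCA_of_x₀_eq_zero hx₀] at hCA
  rw [c, add_comm T.z₀]
  exact sq_le_add_sq_sub_mul_sqrt T.z₁_nonneg T.z₀_nonneg (by linarith) (by linarith)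

lemma sqBC_le_two_of_two_le_sq_a_add_sq_c (hx₀ : T.x₀ = 0) (hb : T.b ^ 2 ≤ 2)
    (hac : 2 ≤ T.a ^ 2 + T.c ^ 2) (hCA : 2 < T.sqCA) : T.sqBC ≤ 2 := by
  have hy₁ : T.y₁ ^ 2 ≤ T.b ^ 2 :=
    pow_le_pow_left₀ T.y₁_nonneg (le_add_of_nonneg_left T.y₀_nonneg) 2
  have hsum : T.a ^ 2 + T.c ^ 2 ≤ 2 * (T.c * √(2 - T.b ^ 2)) := by
    refine le_of_sq_le_sq ?_ (mul_nonneg zero_le_two (mul_nonneg T.c_nonneg (Real.sqrt_nonneg _)))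
    calc (T.a ^ 2 + T.c ^ 2) ^ 2 ≤ 4 * (T.c ^ 2 * (2 - T.b ^ 2)) :=
          add_sq_le_four_mul_two_sub T.half_le_sq_a T.half_le_sq_b T.half_le_sq_c
            T.sq_mul_sq_mul_sq_le_one hac (two_le_sq_b_add_sq_c hx₀ hCA)
      _ = (2 * (T.c * √(2 - T.b ^ 2))) ^ 2 := by
          rw [mul_pow, mul_pow, Real.sq_sqrt (by linarith)]
          norm_num
  rw [sqBC]
  linarith [sq_z₀_le_of_two_lt_sqCA hx₀ hb hCA]

lemma one_le_mul_sqrt_add_mul_sqrt (hb : T.b ^ 2 ≤ 2) (hac : T.a ^ 2 + T.c ^ 2 ≤ 2)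
    (hbc : 2 ≤ T.b ^ 2 + T.c ^ 2) :
    1 ≤ T.b * √(2 - T.a ^ 2 - T.c ^ 2) + T.c * √(2 - T.b ^ 2) := by
  have hb_mul : 0 ≤ T.b * √(2 - T.a ^ 2 - T.c ^ 2) := mul_nonneg T.b_nonneg (Real.sqrt_nonneg _)
  rcases le_total (T.c * √(2 - T.b ^ 2)) 1 with hm1 | hm1
  · have hm : 0 ≤ T.c * √(2 - T.b ^ 2) := mul_nonneg T.c_nonneg (Real.sqrt_nonneg _)
    have hm_sq : (T.c * √(2 - T.b ^ 2)) ^ 2 = T.c ^ 2 * (2 - T.b ^ 2) := by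
      rw [mul_pow, Real.sq_sqrt (by linarith)]
    have hsq : (1 - T.c * √(2 - T.b ^ 2)) ^ 2 ≤ (T.b * √(2 - T.a ^ 2 - T.c ^ 2)) ^ 2 := by
      rw [mul_pow T.b, Real.sq_sqrt (by linarith)]
      exact one_sub_sq_le_mul_two_sub_add T.half_le_sq_a (sq_nonneg _) T.half_le_sq_c
        T.sq_mul_sq_mul_sq_le_one hbc hm_sq hm hm1
    linarith [le_of_sq_le_sq hsq hb_mul]
  · linarith

lemma sqBC_le_two_of_sq_a_add_sq_c_le_two (hx₀ : T.x₀ = 0) (hb : T.b ^ 2 ≤ 2)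
    (hac : T.a ^ 2 + T.c ^ 2 ≤ 2) (hAB : 2 < T.sqAB) (hCA : 2 < T.sqCA) : T.sqBC ≤ 2 := by
  have hy₁ : T.y₁ ^ 2 ≤
      T.b ^ 2 - 2 * (T.b * √(2 - T.a ^ 2 - T.c ^ 2)) + (2 - T.a ^ 2 - T.c ^ 2) := by
    rw [sqAB_of_x₀_eq_zero hx₀] at hAB
    exact sq_le_add_sq_sub_mul_sqrt T.y₀_nonneg T.y₁_nonneg (by linarith) (by linarith)
  rw [sqBC]
  linarith [sq_z₀_le_of_two_lt_sqCA hx₀ hb hCA,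
    one_le_mul_sqrt_add_mul_sqrt hb hac (two_le_sq_b_add_sq_c hx₀ hCA)]

lemma minSideSq_le_two_of_x₀_eq_zero (hx₀ : T.x₀ = 0) : T.minSideSq ≤ 2 := by
  by_contra! hlt
  obtain ⟨hAB, hBC, hCA⟩ := by simpa only [minSideSq, lt_min_iff] using hlt
  refine hBC.not_ge ?_
  rcases le_total 2 (T.b ^ 2) with hb | hb
  · exact sqBC_le_two_of_two_le_sq_b hx₀ hb hAB
  · rcases le_total 2 (T.a ^ 2 + T.c ^ 2) with hac | hac
    · exact sqBC_le_two_of_two_le_sq_a_add_sq_c hx₀ hb hac hCA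
    · exact sqBC_le_two_of_sq_a_add_sq_c_le_two hx₀ hb hac hAB hCA

lemma minSideSq_le_two_of_mul_eq_zero (h : T.x₀ * T.y₀ * T.z₀ = 0) : T.minSideSq ≤ 2 := by
  rcases mul_eq_zero.1 h with hxy | hz₀
  · rcases mul_eq_zero.1 hxy with hx₀ | hy₀
    · exact minSideSq_le_two_of_x₀_eq_zero hx₀
    · rw [← minSideSq_rotate]
      exact minSideSq_le_two_of_x₀_eq_zero hy₀
  · rw [← minSideSq_rotate, ← minSideSq_rotate]
    exact minSideSq_le_two_of_x₀_eq_zero hz₀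

/-- The marked brick after its marked points have moved for time `l` with constant velocity,
orthogonal to the gradients of `sqAB` and `sqBC` at the start and decreasing `x₀`, `y₀` and `z₀`. -/
def slide (T : MarkedBrick) (l : ℝ) (hl : 0 ≤ l) (hx : l * (T.y₀ * T.z₀) ≤ T.x₀)
    (hy : l * (T.x₁ * T.z₀) ≤ T.y₀) (hz : l * (T.x₁ * T.y₁) ≤ T.z₀) : MarkedBrick where
  x₀ := T.x₀ - l * (T.y₀ * T.z₀)
  x₁ := T.x₁ + l * (T.y₀ * T.z₀)
  y₀ := T.y₀ - l * (T.x₁ * T.z₀)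
  y₁ := T.y₁ + l * (T.x₁ * T.z₀)
  z₀ := T.z₀ - l * (T.x₁ * T.y₁)
  z₁ := T.z₁ + l * (T.x₁ * T.y₁)
  x₀_nonneg := sub_nonneg.2 hx
  x₁_nonneg := add_nonneg T.x₁_nonneg (mul_nonneg hl (mul_nonneg T.y₀_nonneg T.z₀_nonneg))
  y₀_nonneg := sub_nonneg.2 hy
  y₁_nonneg := add_nonneg T.y₁_nonneg (mul_nonneg hl (mul_nonneg T.x₁_nonneg T.z₀_nonneg))
  z₀_nonneg := sub_nonneg.2 hz
  z₁_nonneg := add_nonneg T.z₁_nonneg (mul_nonneg hl (mul_nonneg T.x₁_nonneg T.y₁_nonneg))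
  le_x := by linarith [T.le_x]
  le_y := by linarith [T.le_y]
  le_z := by linarith [T.le_z]
  volume_le_one := by simpa only [sub_add_add_cancel] using T.volume_le_one

lemma minSideSq_le_minSideSq_slide (h : T.x₀ * T.y₀ * T.z₀ ≤ T.x₁ * T.y₁ * T.z₁) {l : ℝ}
    (hl : 0 ≤ l) (hx : l * (T.y₀ * T.z₀) ≤ T.x₀) (hy : l * (T.x₁ * T.z₀) ≤ T.y₀)
    (hz : l * (T.x₁ * T.y₁) ≤ T.z₀) : T.minSideSq ≤ (T.slide l hl hx hy hz).minSideSq := by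
  have hAB : T.sqAB ≤ (T.slide l hl hx hy hz).sqAB := by
    simp only [sqAB, c, slide, sub_add_add_cancel]
    linarith [sq_nonneg (l * (T.y₀ * T.z₀)), sq_nonneg (l * (T.x₁ * T.z₀))]
  have hBC : T.sqBC ≤ (T.slide l hl hx hy hz).sqBC := by
    simp only [sqBC, a, slide, sub_add_add_cancel]
    linarith [sq_nonneg (l * (T.x₁ * T.z₀)), sq_nonneg (l * (T.x₁ * T.y₁))]
  have hCA : T.sqCA ≤ (T.slide l hl hx hy hz).sqCA := by
    simp only [sqCA, b, slide, sub_add_add_cancel]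
    linarith [sq_nonneg (l * (T.x₁ * T.y₁)), sq_nonneg (l * (T.y₀ * T.z₀)),
      mul_le_mul_of_nonneg_left h hl]
  exact min_le_min hAB (min_le_min hBC hCA)

lemma exists_mul_eq_zero_and_minSideSq_le (h : T.x₀ * T.y₀ * T.z₀ ≤ T.x₁ * T.y₁ * T.z₁) :
    ∃ T' : MarkedBrick, T'.x₀ * T'.y₀ * T'.z₀ = 0 ∧ T.minSideSq ≤ T'.minSideSq := by
  by_cases h₀ : T.x₀ * T.y₀ * T.z₀ = 0
  · exact ⟨T, h₀, le_rfl⟩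
  have hprod₀ : 0 < T.x₀ * T.y₀ * T.z₀ := (Ne.symm h₀).lt_of_le
    (mul_nonneg (mul_nonneg T.x₀_nonneg T.y₀_nonneg) T.z₀_nonneg)
  have hprod₁ : T.x₁ * T.y₁ * T.z₁ ≠ 0 := (hprod₀.trans_le h).ne'
  simp only [ne_eq, mul_eq_zero, not_or] at h₀ hprod₁
  obtain ⟨⟨-, hy₀⟩, hz₀⟩ := h₀
  obtain ⟨⟨hx₁, hy₁⟩, -⟩ := hprod₁
  have hy₀ : 0 < T.y₀ := T.y₀_nonneg.lt_of_ne' hy₀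
  have hz₀ : 0 < T.z₀ := T.z₀_nonneg.lt_of_ne' hz₀
  have hx₁ : 0 < T.x₁ := T.x₁_nonneg.lt_of_ne' hx₁
  have hy₁ : 0 < T.y₁ := T.y₁_nonneg.lt_of_ne' hy₁
  obtain ⟨l, hl, hle, i, hi⟩ := exists_nonneg_mul_le_and_mul_eq
    (f := ![T.x₀, T.y₀, T.z₀]) (g := ![T.y₀ * T.z₀, T.x₁ * T.z₀, T.x₁ * T.y₁])
    (by simp [Fin.forall_fin_succ, T.x₀_nonneg, T.y₀_nonneg, T.z₀_nonneg])
    (by simp [Fin.forall_fin_succ, hy₀, hz₀, hx₁, hy₁])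
  refine ⟨T.slide l hl (hle 0) (hle 1) (hle 2), ?_, minSideSq_le_minSideSq_slide h ..⟩
  simp only [slide, mul_eq_zero, sub_eq_zero]
  fin_cases i
  · exact Or.inl (Or.inl hi.symm)
  · exact Or.inl (Or.inr hi.symm)
  · exact Or.inr hi.symm

theorem minSideSq_le_two (T : MarkedBrick) : T.minSideSq ≤ 2 := by
  wlog h : T.x₀ * T.y₀ * T.z₀ ≤ T.x₁ * T.y₁ * T.z₁ generalizing T
  · rw [← minSideSq_reflect]
    refine this T.reflect ?_
    simp only [reflect]
    linarith
  obtain ⟨T', hT', hle⟩ := exists_mul_eq_zero_and_minSideSq_le h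
  exact hle.trans (minSideSq_le_two_of_mul_eq_zero hT')

end MarkedBrick

lemma dist_le_sqrt_iff_of_ofLp_eq {P Q : EuclideanSpace ℝ (Fin 3)} {x y z x' y' z' r : ℝ}
    (hP : P = ![x, y, z]) (hQ : Q = ![x', y', z']) (hr : 0 ≤ r) :
    dist P Q ≤ √r ↔ (x - x') ^ 2 + (y - y') ^ 2 + (z - z') ^ 2 ≤ r := by
  rw [EuclideanSpace.dist_eq, Real.sqrt_le_sqrt_iff hr, Fin.sum_univ_three, hP, hQ]
  simp [Real.dist_eq, sq_abs]

theorem equilateral_triangle_in_brick_side_le_sqrt_two_general {a b c s t u : ℝ}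
    (hvol : a * b * c ≤ 1) (ha : 1 / √2 ≤ a) (hb : 1 / √2 ≤ b) (hc : 1 / √2 ≤ c)
    (hs : s ∈ Set.Icc 0 a) (ht : t ∈ Set.Icc 0 b) (hu : u ∈ Set.Icc 0 c)
    {A B C : EuclideanSpace ℝ (Fin 3)}
    (hA : A = ![s, 0, 0]) (hB : B = ![a, t, c]) (hC : C = ![0, b, u]) :
    min (dist A B) (min (dist B C) (dist C A)) ≤ √2 := by
  let T : MarkedBrick :=
    { x₀ := s, x₁ := a - s, y₀ := t, y₁ := b - t, z₀ := c - u, z₁ := u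
      x₀_nonneg := hs.1, x₁_nonneg := sub_nonneg.2 hs.2
      y₀_nonneg := ht.1, y₁_nonneg := sub_nonneg.2 ht.2
      z₀_nonneg := sub_nonneg.2 hu.2, z₁_nonneg := hu.1
      le_x := by simpa using ha
      le_y := by simpa using hb
      le_z := by simpa using hc
      volume_le_one := by simpa using hvol }
  have hmin : T.sqAB ≤ 2 ∨ T.sqBC ≤ 2 ∨ T.sqCA ≤ 2 := by
    simpa only [MarkedBrick.minSideSq, min_le_iff] using T.minSideSq_le_two
  simp only [min_le_iff, dist_le_sqrt_iff_of_ofLp_eq hA hB zero_le_two,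
    dist_le_sqrt_iff_of_ofLp_eq hB hC zero_le_two, dist_le_sqrt_iff_of_ofLp_eq hC hA zero_le_two]
  simp only [MarkedBrick.sqAB, MarkedBrick.sqBC, MarkedBrick.sqCA, MarkedBrick.a, MarkedBrick.b,
    MarkedBrick.c, T, add_sub_cancel, sub_add_cancel] at hmin
  refine hmin.imp (fun h => ?_) (Or.imp (fun h => ?_) fun h => ?_) <;> linarith

/-- If a brick `[0,a] × [0,b] × [0,c]` has unit volume and all side lengths at least
`1/√2`, and the vertices of an equilateral triangle lie on three pairwise skew edges
of the brick, then the side length of the triangle is at most `√2`. -/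
theorem equilateral_triangle_in_brick_side_le_sqrt_two
    (a b c s t u : ℝ)
    (ha : 0 < a) (hb : 0 < b) (hc : 0 < c)
    (hvol : a * b * c = 1)
    (ha2 : 1 / Real.sqrt 2 ≤ a) (hb2 : 1 / Real.sqrt 2 ≤ b) (hc2 : 1 / Real.sqrt 2 ≤ c)
    (hs : s ∈ Set.Icc (0 : ℝ) a) (ht : t ∈ Set.Icc (0 : ℝ) b) (hu : u ∈ Set.Icc (0 : ℝ) c)
    (A B C : EuclideanSpace ℝ (Fin 3))
    (hA : A = ![s, 0, 0]) (hB : B = ![a, t, c]) (hC : C = ![0, b, u])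
    (hAB : dist A B = dist B C) (hBC : dist B C = dist C A) :
    dist A B ≤ Real.sqrt 2 := by
  simpa only [← hBC, ← hAB, min_self] using
    equilateral_triangle_in_brick_side_le_sqrt_two_general hvol.le ha2 hb2 hc2 hs ht hu hA hB hC
end

section
/- Let a, b, c > 0 with abc = 1 and a ≥ 1/√2, b ≥ 1/√2, c ≥ 1/√2. Let A = (s, 0, 0), B = (a, t, c), C = (0, b, u) be points of ℝ³ with s ∈ [0, a], t ∈ [0, b], u ∈ [0, c] (so A, B, C lie on three pairwise skew edges of the brick [0,a] × [0,b] × [0,c]). Then at least one of the three side lengths of the triangle ABC is at most √2: min(dist(A,B), dist(B,C), dist(C,A)) ≤ √2. -/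
/-!
Permuting the axes, assume `a ≤ b ≤ c`. Write `A = (a - x, 0, 0)` and `B = (a, y, c)`, and let `S`
be the set of `(x, y)` for which some point of the line through `E₃` is within `√2` of both `A` and
`B`. If `(x, y) ∈ S`, then no position of `C` on `E₃` makes both `BC` and `CA` longer than `√2`. The
set `S` is convex, being a projection of an intersection of two convex cylinders, and `(x, y)` stays
in `S` when `x` increases up to `a` or `y` up to `b`.

If `c² ≥ 2`, then `(0, 0) ∈ S` and every `(x, y)` is in `S`. Otherwise `AB` is longer than `√2` only
if `(x, y)` lies outside the circle of radius `r = √(2 - c²)` about the origin, hence above a chord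
of that circle, and it suffices that `S` contains the endpoints of the chord: these are `(0, r)`
and either `(r, 0)` or, when `r > a`, the point of the circle with `x = a`. The volume enters only
through the inequality `2a² + b²c² ≤ 3`.
-/

theorem dist_le_sqrt_iff_sum_sq_le {n : Type*} [Fintype n] {k : ℝ} (hk : 0 ≤ k)
    (p q : EuclideanSpace ℝ n) : dist p q ≤ √k ↔ ∑ i, (p i - q i) ^ 2 ≤ k := by
  simp only [EuclideanSpace.dist_eq, Real.sqrt_le_sqrt_iff hk, Real.dist_eq, sq_abs]

theorem half_le_sq_of_one_div_sqrt_two_le_s1 {v : ℝ} (hv : 1 / √2 ≤ v) : 1 / 2 ≤ v ^ 2 := by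
  simpa [div_pow] using pow_le_pow_left₀ (by positivity) hv 2

theorem le_sqrt_add_sqrt_of_sq_le {p q m c : ℝ} (hp : 0 ≤ p) (hq : 0 ≤ q) (hm : m ^ 2 ≤ p * q)
    (hc : c ^ 2 ≤ p + q + 2 * m) : c ≤ √p + √q := by
  refine le_of_sq_le_sq ?_ (by positivity)
  have hm_le : m ≤ √p * √q := Real.sqrt_mul hp q ▸ Real.le_sqrt_of_sq_le hm
  calc c ^ 2 ≤ p + q + 2 * (√p * √q) := by linarith
    _ = (√p + √q) ^ 2 := by rw [add_sq, Real.sq_sqrt hp, Real.sq_sqrt hq]; ring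

theorem exists_sq_le_and_sub_sq_le {p q c : ℝ} (hp : 0 ≤ p) (hq : 0 ≤ q) (hc : 0 ≤ c)
    (h : c ≤ √p + √q) : ∃ u, (c - u) ^ 2 ≤ p ∧ u ^ 2 ≤ q := by
  rcases le_total c √q with hcq | hqc
  · exact ⟨c, by simpa using hp, (Real.le_sqrt hc hq).1 hcq⟩
  · have hsub : c - √q ≤ √p := by linarith
    exact ⟨√q, (Real.le_sqrt (sub_nonneg.2 hqc) hp).1 hsub, (Real.sq_sqrt hq).le⟩

theorem sq_convexCombo_le {α β : ℝ} (hα : 0 ≤ α) (hβ : 0 ≤ β) (hαβ : α + β = 1) (p q : ℝ) :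
    (α * p + β * q) ^ 2 ≤ α * p ^ 2 + β * q ^ 2 :=
  even_two.convexOn_pow.2 (Set.mem_univ p) (Set.mem_univ q) hα hβ hαβ

theorem exists_mem_chord_le {r x₀ y₀ x y : ℝ} (hx₀ : 0 ≤ x₀) (hr : x₀ ^ 2 + y₀ ^ 2 = r ^ 2)
    (hx : 0 ≤ x) (hy : 0 ≤ y) (hxy : r ^ 2 ≤ x ^ 2 + y ^ 2) (h : x ≤ x₀ ∨ y₀ = 0) :
    ∃ v ∈ segment ℝ (0, r) (x₀, y₀), v ≤ (x, y) := by
  rcases le_or_gt x x₀ with hxx₀ | hx₀x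
  · obtain ⟨α, β, hα, hβ, hαβ, rfl⟩ : x ∈ segment ℝ 0 x₀ := by
      rw [segment_eq_Icc hx₀]; exact ⟨hx, hxx₀⟩
    refine ⟨_, ⟨α, β, hα, hβ, hαβ, rfl⟩, by simp, ?_⟩
    suffices α * r + β * y₀ ≤ y by simpa using this
    refine le_of_sq_le_sq ?_ hy
    obtain rfl : α = 1 - β := by linarith
    calc ((1 - β) * r + β * y₀) ^ 2 ≤ (1 - β) * r ^ 2 + β * y₀ ^ 2 :=
          sq_convexCombo_le hα hβ hαβ r y₀
      _ = r ^ 2 - β * x₀ ^ 2 := by rw [← hr]; ring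
      _ ≤ r ^ 2 - (β * x₀) ^ 2 := by
          have : 0 ≤ β * (1 - β) * x₀ ^ 2 := by positivity
          linarith
      _ ≤ y ^ 2 := by simpa [add_comm] using hxy
  · obtain rfl := h.resolve_left hx₀x.not_ge
    exact ⟨_, right_mem_segment ℝ _ _, hx₀x.le, hy⟩

theorem two_mul_add_mul_le_three_of_mul_le_one {p q r : ℝ} (hp : 1 / 2 ≤ p) (hpq : p ≤ q)
    (hqr : q ≤ r) (hvol : p * q * r ≤ 1) : 2 * p + q * r ≤ 3 := by
  have hp₀ : 0 < p := by linarith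
  have hq₀ : 0 < q := by linarith
  have hp_le_one : p ≤ 1 := by
    refine (pow_le_one_iff_of_nonneg hp₀.le three_ne_zero).1 ?_
    calc p ^ 3 = p * p * p := by ring
      _ ≤ p * q * r :=
          mul_le_mul (mul_le_mul_of_nonneg_left hpq hp₀.le) (hpq.trans hqr) hp₀.le (by positivity)
      _ ≤ 1 := hvol
  have : 0 ≤ p * (3 - 2 * p - q * r) := by
    linarith [mul_nonneg (sub_nonneg.2 hp) (sub_nonneg.2 hp_le_one)]
  linarith [nonneg_of_mul_nonneg_right this hp₀]

theorem sq_add_sq_le_two_of_two_mul_sq_add_le {a b c : ℝ} (hb : 0 ≤ b) (hbc : b ≤ c)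
    (h : 2 * a ^ 2 + b ^ 2 * c ^ 2 ≤ 3) : a ^ 2 + b ^ 2 ≤ 2 := by
  have hbc_sq : b ^ 2 * b ^ 2 ≤ b ^ 2 * c ^ 2 := by gcongr
  have ha : 0 ≤ 2 - a ^ 2 := by linarith [mul_nonneg (sq_nonneg b) (sq_nonneg c)]
  have hb_sq : b ^ 2 ≤ 2 - a ^ 2 := le_of_sq_le_sq (by linarith [sq_nonneg (1 - a ^ 2)]) ha
  linarith

/-- The pairs `(x, y)` for which some point `(0, b, u)` of the line through `E₃` is at distance at
most `√2` from both `(a, y, c)` and `(a - x, 0, 0)`. The number `u` is not confined to `[0, c]`. -/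
def reachable (a b c : ℝ) : Set (ℝ × ℝ) :=
  {v | ∃ u, a ^ 2 + (b - v.2) ^ 2 + (c - u) ^ 2 ≤ 2 ∧ (a - v.1) ^ 2 + b ^ 2 + u ^ 2 ≤ 2}

namespace reachable

variable {a b c r x y : ℝ}

theorem convex (a b c : ℝ) : Convex ℝ (reachable a b c) := by
  rintro ⟨x, y⟩ ⟨u, hBC, hCA⟩ ⟨x', y'⟩ ⟨u', hBC', hCA'⟩ α β hα hβ hαβ
  obtain rfl : α = 1 - β := by linarith
  have combo_le {p q : ℝ} (hp : p ≤ 2) (hq : q ≤ 2) : (1 - β) * p + β * q ≤ 2 := by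
    linarith [mul_le_mul_of_nonneg_left hp hα, mul_le_mul_of_nonneg_left hq hβ]
  have combo_sq := sq_convexCombo_le hα hβ hαβ
  refine ⟨(1 - β) * u + β * u', ?_, ?_⟩ <;>
    simp only [Prod.smul_mk, Prod.mk_add_mk, smul_eq_mul]
  · linarith [combo_le hBC hBC', combo_sq (b - y) (b - y'), combo_sq (c - u) (c - u')]
  · linarith [combo_le hCA hCA', combo_sq (a - x) (a - x'), combo_sq u u']

theorem mono {v w : ℝ × ℝ} (hv : v ∈ reachable a b c) (hvw : v ≤ w) (hw : w ≤ (a, b)) :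
    w ∈ reachable a b c := by
  obtain ⟨u, hBC, hCA⟩ := hv
  have hx : (a - w.1) ^ 2 ≤ (a - v.1) ^ 2 :=
    pow_le_pow_left₀ (sub_nonneg.2 hw.1) (sub_le_sub_left hvw.1 a) 2
  have hy : (b - w.2) ^ 2 ≤ (b - v.2) ^ 2 :=
    pow_le_pow_left₀ (sub_nonneg.2 hw.2) (sub_le_sub_left hvw.2 b) 2
  exact ⟨u, by linarith, by linarith⟩

theorem mem_of_sq_le {m : ℝ} (hc : 0 ≤ c) (hB : 0 ≤ 2 - a ^ 2 - (b - y) ^ 2)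
    (hA : 0 ≤ 2 - (a - x) ^ 2 - b ^ 2)
    (hm : m ^ 2 ≤ (2 - a ^ 2 - (b - y) ^ 2) * (2 - (a - x) ^ 2 - b ^ 2))
    (h : c ^ 2 ≤ (2 - a ^ 2 - (b - y) ^ 2) + (2 - (a - x) ^ 2 - b ^ 2) + 2 * m) :
    (x, y) ∈ reachable a b c := by
  obtain ⟨u, hBC, hCA⟩ :=
    exists_sq_le_and_sub_sq_le hB hA hc (le_sqrt_add_sqrt_of_sq_le hB hA hm h)
  exact ⟨u, by linarith, by linarith⟩

theorem zero_zero_mem (ha₀ : 0 ≤ a) (ha : 1 / 2 ≤ a ^ 2) (hab : a ≤ b) (hc : 2 ≤ c ^ 2)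
    (h : 2 * a ^ 2 + b ^ 2 * c ^ 2 ≤ 3) : (0, 0) ∈ reachable a b c := by
  suffices 0 ≤ 8 - 4 * (a ^ 2 + b ^ 2) - c ^ 2 from ⟨c / 2, by linarith, by linarith⟩
  have hab_sq : a ^ 2 ≤ b ^ 2 := by gcongr
  have hc_le : c ^ 2 ≤ 4 := by
    linarith [mul_le_mul_of_nonneg_right (ha.trans hab_sq) (sq_nonneg c)]
  have hsum : (a ^ 2 + b ^ 2) * (c ^ 2 + 2) ≤ 6 := by
    linarith [mul_nonneg (sub_nonneg.2 hab_sq) (sub_nonneg.2 hc)]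
  refine nonneg_of_mul_nonneg_right ?_ (by positivity : 0 < c ^ 2 + 2)
  calc 0 ≤ (c ^ 2 - 2) * (4 - c ^ 2) := mul_nonneg (sub_nonneg.2 hc) (sub_nonneg.2 hc_le)
    _ ≤ (c ^ 2 + 2) * (8 - 4 * (a ^ 2 + b ^ 2) - c ^ 2) := by linarith

theorem zero_radius_mem (hb₀ : 0 ≤ b) (hb : 1 / 2 ≤ b ^ 2) (hbc : b ≤ c)
    (h : 2 * a ^ 2 + b ^ 2 * c ^ 2 ≤ 3) (hr₀ : 0 ≤ r) (hr : r ^ 2 + c ^ 2 = 2) :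
    (0, r) ∈ reachable a b c := by
  have hab_sq := sq_add_sq_le_two_of_two_mul_sq_add_le hb₀ hbc h
  have hbc_sq : b ^ 2 ≤ c ^ 2 := by gcongr
  have hr_le : r ≤ 2 * b := le_of_sq_le_sq (by linarith) (by linarith)
  have hB : 2 - a ^ 2 - b ^ 2 ≤ 2 - a ^ 2 - (b - r) ^ 2 := by
    linarith [mul_nonneg hr₀ (sub_nonneg.2 hr_le)]
  have hbr_le_one : b * r ≤ 1 := by linarith [two_mul_le_add_sq b r]
  have hbr : b ^ 2 * (2 - c ^ 2) ≤ b * r := by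
    rw [← eq_sub_of_add_eq hr, ← mul_pow]
    exact pow_le_of_le_one (by positivity) hbr_le_one two_ne_zero
  refine mem_of_sq_le (m := 2 - a ^ 2 - b ^ 2) (hb₀.trans hbc) (by linarith) (by linarith) ?_
    (by linarith)
  rw [sub_zero, sq]
  exact mul_le_mul_of_nonneg_right hB (by linarith)

theorem radius_zero_mem (hb : 0 ≤ b) (hbc : b ≤ c) (h : 2 * a ^ 2 + b ^ 2 * c ^ 2 ≤ 3)
    (hr₀ : 0 ≤ r) (hra : r ≤ a) (hr : r ^ 2 + c ^ 2 = 2) : (r, 0) ∈ reachable a b c := by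
  have hab_sq := sq_add_sq_le_two_of_two_mul_sq_add_le hb hbc h
  have hr_sq : r ^ 2 ≤ a * r := by rw [sq]; gcongr
  -- `m` is half of `c²` minus the two factors in `hm`, the least value `mem_of_sq_le` allows.
  refine mem_of_sq_le (m := a ^ 2 + b ^ 2 - 1 - a * r) (hb.trans hbc) (by linarith)
    (by linarith [sq_nonneg r]) ?_ (by linarith)
  rw [eq_sub_of_add_eq' hr] at h
  calc (a ^ 2 + b ^ 2 - 1 - a * r) ^ 2
      = (2 - a ^ 2 - (b - 0) ^ 2) * (2 - (a - r) ^ 2 - b ^ 2)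
        - ((3 - (2 * a ^ 2 + b ^ 2 * (2 - r ^ 2))) + 2 * (a * r - r ^ 2)) := by ring
    _ ≤ (2 - a ^ 2 - (b - 0) ^ 2) * (2 - (a - r) ^ 2 - b ^ 2) := by linarith

theorem mem_of_fst_eq_side {e : ℝ} (ha : 1 / 2 ≤ a ^ 2) (hb : 0 ≤ b) (hbc : b ≤ c)
    (h : 2 * a ^ 2 + b ^ 2 * c ^ 2 ≤ 3) (he₀ : 0 ≤ e) (he : a ^ 2 + e ^ 2 + c ^ 2 = 2) :
    (a, e) ∈ reachable a b c := by
  have hab_sq := sq_add_sq_le_two_of_two_mul_sq_add_le hb hbc h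
  have hbc_sq : b ^ 2 ≤ c ^ 2 := by gcongr
  have hbe : 0 ≤ b * e := by positivity
  have hB : 0 ≤ 2 - a ^ 2 - (b - e) ^ 2 := by linarith
  have hA : 0 ≤ 2 - (a - a) ^ 2 - b ^ 2 := by linarith
  rcases le_total (b ^ 2 - 1) (b * e) with hle | hle
  · exact mem_of_sq_le (m := 0) (hb.trans hbc) hB hA (by simpa using mul_nonneg hB hA) (by linarith)
  · refine mem_of_sq_le (m := b ^ 2 - 1 - b * e) (hb.trans hbc) hB hA ?_ (by linarith)
    have hbe_le_half : b * e ≤ 1 / 2 := by linarith [sq_nonneg e]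
    have hbe_sq : 2 * (b * e) ^ 2 ≤ b * e := by
      linarith [mul_nonneg hbe (sub_nonneg.2 hbe_le_half)]
    have he_sq : e ^ 2 ≤ (b * e) ^ 2 := by
      rw [mul_pow]
      exact le_mul_of_one_le_left (sq_nonneg e) (by linarith)
    have ha_sq : a ^ 2 = 2 - e ^ 2 - c ^ 2 := by linarith
    rw [ha_sq] at h ⊢
    calc (b ^ 2 - 1 - b * e) ^ 2
        = (2 - (2 - e ^ 2 - c ^ 2) - (b - e) ^ 2) * (2 - (a - a) ^ 2 - b ^ 2)
          - ((3 - (2 * (2 - e ^ 2 - c ^ 2) + b ^ 2 * c ^ 2))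
            + (2 * (b * e) - (b * e) ^ 2 - 2 * e ^ 2)) := by ring
      _ ≤ (2 - (2 - e ^ 2 - c ^ 2) - (b - e) ^ 2) * (2 - (a - a) ^ 2 - b ^ 2) := by
          linarith [sq_nonneg e]

theorem mem_of_two_le (ha₀ : 0 ≤ a) (ha : 1 / 2 ≤ a ^ 2) (hab : a ≤ b) (hbc : b ≤ c)
    (h : 2 * a ^ 2 + b ^ 2 * c ^ 2 ≤ 3) (hx : x ∈ Set.Icc 0 a) (hy : y ∈ Set.Icc 0 b)
    (hxy : 2 ≤ x ^ 2 + y ^ 2 + c ^ 2) : (x, y) ∈ reachable a b c := by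
  have hb₀ : 0 ≤ b := ha₀.trans hab
  have hb : 1 / 2 ≤ b ^ 2 := ha.trans (by gcongr)
  have hxy_le : (x, y) ≤ (a, b) := ⟨hx.2, hy.2⟩
  rcases le_total 2 (c ^ 2) with hc | hc
  · exact mono (zero_zero_mem ha₀ ha hab hc h) ⟨hx.1, hy.1⟩ hxy_le
  obtain ⟨r, hr₀, hr⟩ : ∃ r, 0 ≤ r ∧ r ^ 2 + c ^ 2 = 2 :=
    ⟨√(2 - c ^ 2), Real.sqrt_nonneg _, by rw [Real.sq_sqrt (by linarith)]; ring⟩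
  have mem_of_chord {x₀ y₀ : ℝ} (hx₀ : 0 ≤ x₀) (hmem : (x₀, y₀) ∈ reachable a b c)
      (hcircle : x₀ ^ 2 + y₀ ^ 2 = r ^ 2) (hcover : x ≤ x₀ ∨ y₀ = 0) :
      (x, y) ∈ reachable a b c := by
    obtain ⟨v, hv, hvxy⟩ :=
      exists_mem_chord_le hx₀ hcircle hx.1 hy.1 (by linarith) hcover
    have hv_mem := (convex a b c).segment_subset (zero_radius_mem hb₀ hb hbc h hr₀ hr) hmem hv
    exact mono hv_mem hvxy hxy_le
  rcases le_total r a with hra | har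
  · exact mem_of_chord hr₀ (radius_zero_mem hb₀ hbc h hr₀ hra hr) (by simp) (.inr rfl)
  · have ha_sq : a ^ 2 ≤ r ^ 2 := by gcongr
    obtain ⟨e, he₀, he⟩ : ∃ e, 0 ≤ e ∧ a ^ 2 + e ^ 2 = r ^ 2 :=
      ⟨√(r ^ 2 - a ^ 2), Real.sqrt_nonneg _, by rw [Real.sq_sqrt (by linarith)]; ring⟩
    exact mem_of_chord ha₀ (mem_of_fst_eq_side ha hb₀ hbc h he₀ (by linarith)) he (.inl hx.2)

end reachable

/-- Every triangle with vertices `(a - x, 0, 0)`, `(a, y, c)`, `(0, b, u)` on the skew edges `E₁`,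
`E₂`, `E₃` has a side of length at most `√2`, expressed through squared lengths. Measuring the first
vertex from the far end of `E₁` puts the sides in the form suited to permuting `a`, `b`, `c`. -/
def ForcesShortSide (a b c : ℝ) : Prop :=
  ∀ x ∈ Set.Icc 0 a, ∀ y ∈ Set.Icc 0 b, ∀ u ∈ Set.Icc 0 c,
    x ^ 2 + y ^ 2 + c ^ 2 ≤ 2 ∨ a ^ 2 + (b - y) ^ 2 + (c - u) ^ 2 ≤ 2 ∨
      (a - x) ^ 2 + b ^ 2 + u ^ 2 ≤ 2

namespace ForcesShortSide

variable {a b c : ℝ}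

theorem swap_left (h : ForcesShortSide b a c) : ForcesShortSide a b c := by
  intro x hx y hy u hu
  have := h y hy x hx (c - u) (Set.sub_mem_Icc_zero_iff_right.2 hu)
  rw [sub_sub_cancel] at this
  grind

theorem swap_right (h : ForcesShortSide a c b) : ForcesShortSide a b c := by
  intro x hx y hy u hu
  have := h (a - x) (Set.sub_mem_Icc_zero_iff_right.2 hx) u hu y hy
  rw [sub_sub_cancel] at this
  grind

theorem of_two_mul_sq_add_le_three (ha₀ : 0 ≤ a) (ha : 1 / 2 ≤ a ^ 2) (hab : a ≤ b) (hbc : b ≤ c)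
    (h : 2 * a ^ 2 + b ^ 2 * c ^ 2 ≤ 3) : ForcesShortSide a b c := by
  intro x hx y hy u hu
  refine or_iff_not_imp_left.2 fun hAB => ?_
  obtain ⟨u₀, hBC, hCA⟩ :=
    reachable.mem_of_two_le ha₀ ha hab hbc h hx hy (not_le.1 hAB).le
  rcases le_total u₀ u with hu₀ | hu₀
  · have : (c - u) ^ 2 ≤ (c - u₀) ^ 2 :=
      pow_le_pow_left₀ (sub_nonneg.2 hu.2) (sub_le_sub_left hu₀ c) 2
    exact .inl (by linarith)
  · have : u ^ 2 ≤ u₀ ^ 2 := pow_le_pow_left₀ hu.1 hu₀ 2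
    exact .inr (by linarith)

theorem of_sorted (ha : 1 / √2 ≤ a) (hab : a ≤ b) (hbc : b ≤ c) (hvol : a * b * c ≤ 1) :
    ForcesShortSide a b c := by
  have ha₀ : 0 ≤ a := le_trans (by positivity) ha
  have hb₀ : 0 ≤ b := ha₀.trans hab
  have hc₀ : 0 ≤ c := hb₀.trans hbc
  have ha_sq : 1 / 2 ≤ a ^ 2 := half_le_sq_of_one_div_sqrt_two_le_s1 ha
  have hvol_sq : a ^ 2 * b ^ 2 * c ^ 2 ≤ 1 := by
    rw [← mul_pow, ← mul_pow]
    exact pow_le_one₀ (by positivity) hvol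
  exact of_two_mul_sq_add_le_three ha₀ ha_sq hab hbc
    (two_mul_add_mul_le_three_of_mul_le_one ha_sq (by gcongr) (by gcongr) hvol_sq)

theorem of_volume_le_one (ha : 1 / √2 ≤ a) (hb : 1 / √2 ≤ b) (hc : 1 / √2 ≤ c)
    (hvol : a * b * c ≤ 1) : ForcesShortSide a b c := by
  rcases le_total a b with hab | hba
  · rcases le_total b c with hbc | hcb
    · exact of_sorted ha hab hbc hvol
    rcases le_total a c with hac | hca
    · exact (of_sorted ha hac hcb (by linarith)).swap_right
    · exact (of_sorted hc hca hab (by linarith)).swap_left.swap_right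
  · rcases le_total a c with hac | hca
    · exact (of_sorted hb hba hac (by linarith)).swap_left
    rcases le_total b c with hbc | hcb
    · exact (of_sorted hb hbc hca (by linarith)).swap_right.swap_left
    · exact (of_sorted hc hcb hba (by linarith)).swap_left.swap_right.swap_left

end ForcesShortSide

theorem triangle_in_brick_min_side_le_sqrt_two_general
    (a b c s t u : ℝ) (ha : 1 / √2 ≤ a) (hb : 1 / √2 ≤ b) (hc : 1 / √2 ≤ c)
    (hvol : a * b * c ≤ 1)
    (hs : s ∈ Set.Icc (0 : ℝ) a) (ht : t ∈ Set.Icc (0 : ℝ) b) (hu : u ∈ Set.Icc (0 : ℝ) c)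
    (A B C : EuclideanSpace ℝ (Fin 3))
    (hA : A = ![s, 0, 0]) (hB : B = ![a, t, c]) (hC : C = ![0, b, u]) :
    min (dist A B) (min (dist B C) (dist C A)) ≤ √2 := by
  have hshort := ForcesShortSide.of_volume_le_one ha hb hc hvol (a - s)
    (Set.sub_mem_Icc_zero_iff_right.2 hs) t ht u hu
  simp only [min_le_iff, dist_le_sqrt_iff_sum_sq_le zero_le_two, Fin.sum_univ_three, hA, hB, hC]
  simpa [sub_sq_comm] using hshort

/-- If a brick `[0,a] × [0,b] × [0,c]` has unit volume and all side lengths at least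
`1/√2`, and the vertices of a triangle lie on three pairwise skew edges of the brick,
then at least one side of the triangle has length at most `√2`. -/
theorem triangle_in_brick_min_side_le_sqrt_two
    (a b c s t u : ℝ)
    (ha : 0 < a) (hb : 0 < b) (hc : 0 < c)
    (hvol : a * b * c = 1)
    (ha2 : 1 / Real.sqrt 2 ≤ a) (hb2 : 1 / Real.sqrt 2 ≤ b) (hc2 : 1 / Real.sqrt 2 ≤ c)
    (hs : s ∈ Set.Icc (0 : ℝ) a) (ht : t ∈ Set.Icc (0 : ℝ) b) (hu : u ∈ Set.Icc (0 : ℝ) c)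
    (A B C : EuclideanSpace ℝ (Fin 3))
    (hA : A = ![s, 0, 0]) (hB : B = ![a, t, c]) (hC : C = ![0, b, u]) :
    min (dist A B) (min (dist B C) (dist C A)) ≤ Real.sqrt 2 :=
  triangle_in_brick_min_side_le_sqrt_two_general a b c s t u ha2 hb2 hc2 hvol.le hs ht hu
    A B C hA hB hC
end

section
/- Let β, θ be real numbers with 0 < β ≤ π/2 and 0 ≤ θ ≤ π/2 − β. Then cos θ · sin(β + θ) ≥ sin β, and equality holds if and only if θ = 0 or θ = π/2 − β. -/
open Real

theorem cos_mul_sin_add_self (β θ : ℝ) :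
    cos θ * sin (β + θ) = sin β + sin θ * cos (β + θ) := by
  have sin_β : sin β = sin (β + θ) * cos θ - cos (β + θ) * sin θ := by
    rw [← sin_sub, add_sub_cancel_right]
  rw [sin_β]
  ring

theorem sin_lt_cos_mul_sin_add {β θ : ℝ} (hθ : θ ∈ Set.Ioo 0 π)
    (hβθ : β + θ ∈ Set.Ioo (-(π / 2)) (π / 2)) :
    sin β < cos θ * sin (β + θ) := by
  rw [cos_mul_sin_add_self]
  exact lt_add_of_pos_right _ (mul_pos (sin_pos_of_mem_Ioo hθ) (cos_pos_of_mem_Ioo hβθ))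

theorem cos_mul_sin_add_of_eq_zero_or_eq_pi_div_two_sub {β θ : ℝ}
    (h : θ = 0 ∨ θ = π / 2 - β) : cos θ * sin (β + θ) = sin β := by
  rcases h with rfl | rfl <;> simp [cos_pi_div_two_sub]

theorem cos_mul_sin_ge_sin_general {β θ : ℝ} (hβ : -(π / 2) ≤ β)
    (hθ : θ ∈ Set.Icc 0 (π / 2 - β)) :
    sin β ≤ cos θ * sin (β + θ) ∧
      (cos θ * sin (β + θ) = sin β ↔ θ = 0 ∨ θ = π / 2 - β) := by
  by_cases endpoint : θ = 0 ∨ θ = π / 2 - β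
  · have equality := cos_mul_sin_add_of_eq_zero_or_eq_pi_div_two_sub endpoint
    exact ⟨equality.ge, iff_of_true equality endpoint⟩
  · obtain ⟨θ_ne_zero, θ_ne_right⟩ := not_or.mp endpoint
    have θ_pos : 0 < θ := hθ.1.lt_of_ne' θ_ne_zero
    have θ_lt : θ < π / 2 - β := hθ.2.lt_of_ne θ_ne_right
    have strict : sin β < cos θ * sin (β + θ) :=
      sin_lt_cos_mul_sin_add ⟨θ_pos, by linarith⟩ ⟨by linarith, by linarith⟩
    exact ⟨strict.le, iff_of_false strict.ne' endpoint⟩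

/-- For `0 < β ≤ π/2` and `0 ≤ θ ≤ π/2 - β` we have `cos θ · sin (β + θ) ≥ sin β`,
with equality if and only if `θ = 0` or `θ = π/2 - β`. -/
theorem cos_mul_sin_ge_sin (β θ : ℝ)
    (hβ0 : 0 < β) (hβ : β ≤ π / 2)
    (hθ0 : 0 ≤ θ) (hθ : θ ≤ π / 2 - β) :
    Real.sin β ≤ Real.cos θ * Real.sin (β + θ) ∧
      (Real.cos θ * Real.sin (β + θ) = Real.sin β ↔ θ = 0 ∨ θ = π / 2 - β) :=
  cos_mul_sin_ge_sin_general (by linarith [pi_pos]) ⟨hθ0, hθ⟩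
end

section
/- Define f : (0,∞) → ℝ by f(t) = (2/3)·(t + √(t² + 3/t)). Then f attains a unique minimum on the half-line [1/2, ∞), and the minimizing point lies in the open interval (1/2, 1). -/
/-!
The inequality `v < t + √(t² + c / t)` follows from `(v - t)² < t² + c / t`, that is, from
`0 < 2 v t² - v² t + c`. This quadratic in `t` has discriminant `v (v³ - 8 c)`, so at the critical
level `v = 4 a` with `c = 8 a³` it is `8 a (t - a)²`, and the level is attained exactly at `t = a`.
-/

theorem sq_add_div_sub_sq_eq {K : Type*} [Field K] (a : K) {t : K} (ht : t ≠ 0) :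
    t ^ 2 + 8 * a ^ 3 / t - (4 * a - t) ^ 2 = 8 * a * (t - a) ^ 2 / t := by
  field_simp
  ring

theorem add_sqrt_sq_add_div_self {a : ℝ} (ha : 0 < a) :
    a + √(a ^ 2 + 8 * a ^ 3 / a) = 4 * a := by
  have radicand_eq : a ^ 2 + 8 * a ^ 3 / a = (3 * a) ^ 2 := by
    field_simp
    ring
  rw [radicand_eq, Real.sqrt_sq (by positivity)]
  ring

theorem four_mul_lt_add_sqrt_sq_add_div {a t : ℝ} (ha : 0 < a) (ht : 0 < t) (hta : t ≠ a) :
    4 * a < t + √(t ^ 2 + 8 * a ^ 3 / t) := by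
  have gap_pos : 0 < 8 * a * (t - a) ^ 2 / t := by
    have : t - a ≠ 0 := sub_ne_zero.mpr hta
    positivity
  have sq_lt : (4 * a - t) ^ 2 < t ^ 2 + 8 * a ^ 3 / t :=
    sub_pos.mp (sq_add_div_sub_sq_eq a ht.ne' ▸ gap_pos)
  exact sub_lt_iff_lt_add'.mp (Real.lt_sqrt_of_sq_lt sq_lt)

theorem exists_mem_Ioo_pow_eq {x y c : ℝ} {n : ℕ} (hxy : x ≤ y) (hxc : x ^ n < c)
    (hcy : c < y ^ n) : ∃ a ∈ Set.Ioo x y, a ^ n = c :=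
  intermediate_value_Ioo hxy (continuous_pow n).continuousOn ⟨hxc, hcy⟩

theorem forall_le_and_unique_of_forall_ne_lt {α β : Type*} [Preorder β] {f : α → β} {S : Set α}
    {a : α} (ha : a ∈ S) (hlt : ∀ s ∈ S, s ≠ a → f a < f s) :
    (∀ s ∈ S, f a ≤ f s) ∧ ∀ s ∈ S, (∀ r ∈ S, f s ≤ f r) → s = a := by
  refine ⟨fun s hs ↦ ?_, fun s hs hmin ↦ ?_⟩
  · obtain rfl | hsa := eq_or_ne s a
    · exact le_rfl
    · exact (hlt s hs hsa).le
  · by_contra hsa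
    exact (hlt s hs hsa).not_ge (hmin a ha)

theorem f_unique_min_on_Ici_general (f : ℝ → ℝ)
    (hf : ∀ t : ℝ, 0 < t → f t = (2 / 3) * (t + √(t ^ 2 + 3 / t))) :
    ∃ t₀ ∈ Set.Ioo (1 / 2 : ℝ) 1, ∀ s : ℝ, 0 < s → s ≠ t₀ → f t₀ < f s := by
  obtain ⟨a, ha_mem, ha_cube⟩ : ∃ a ∈ Set.Ioo (1 / 2 : ℝ) 1, a ^ 3 = 3 / 8 :=
    exists_mem_Ioo_pow_eq (by norm_num) (by norm_num) (by norm_num)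
  have ha : 0 < a := one_half_pos.trans ha_mem.1
  have three_eq : (3 : ℝ) = 8 * a ^ 3 := by linarith
  have f_eq (t : ℝ) (ht : 0 < t) : f t = (2 / 3) * (t + √(t ^ 2 + 8 * a ^ 3 / t)) := by
    rw [hf t ht, ← three_eq]
  refine ⟨a, ha_mem, fun s hs hsa ↦ ?_⟩
  rw [f_eq a ha, f_eq s hs, add_sqrt_sq_add_div_self ha]
  gcongr
  exact four_mul_lt_add_sqrt_sq_add_div ha hs hsa

/-- The function `f(t) = (2/3)(t + √(t² + 3/t))` attains a unique minimum on the
half-line `[1/2, ∞)`, and the minimizing point lies in the open interval `(1/2, 1)`. -/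
theorem f_unique_min_on_Ici (f : ℝ → ℝ)
    (hf : ∀ t : ℝ, 0 < t → f t = (2 / 3) * (t + Real.sqrt (t ^ 2 + 3 / t))) :
    ∃ t₀ ∈ Set.Ioo (1 / 2 : ℝ) 1,
      (∀ s ∈ Set.Ici (1 / 2 : ℝ), f t₀ ≤ f s) ∧
      (∀ s ∈ Set.Ici (1 / 2 : ℝ), (∀ r ∈ Set.Ici (1 / 2 : ℝ), f s ≤ f r) → s = t₀) := by
  obtain ⟨t₀, ht₀, hlt⟩ := f_unique_min_on_Ici_general f hf
  exact ⟨t₀, ht₀, forall_le_and_unique_of_forall_ne_lt ht₀.1.le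
    fun s hs ↦ hlt s (one_half_pos.trans_le hs)⟩
end

section
/- Let a, b, c, d > 0 satisfy abc = 1, a² ≥ 1/2, b² ≥ 1/2, c² ≥ 1/2, d² = a² + b² + c²/4 and d = c. Then d² ≤ 2, i.e. the equilateral triangle in this configuration has side length at most √2. -/
/-!
Put `x = a²`, `y = b²` and `v = c²`, so that `xyv = 1`. Since `(x - 1/2) (y - 1/2) ≥ 0`, the sum
`x + y` is largest when one of `x`, `y` equals `1/2`, which gives `x + y ≤ 2 / v + 1 / 2`; also
`v ≤ 4`. Hence `d²` is at most both `v` and `2 / v + 1 / 2 + v / 4`. The latter is convex in `v`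
and equals `2` at `v = 2` and at `v = 4`, so one of the two bounds is at most `2` for each `v ≤ 4`.
-/

section

variable {R : Type*} [CommRing R] [LinearOrder R] [IsStrictOrderedRing R] {m x y : R}

theorem mul_add_le_mul_add_sq (hx : m ≤ x) (hy : m ≤ y) : m * (x + y) ≤ x * y + m ^ 2 := by
  have hprod : 0 ≤ (x - m) * (y - m) := mul_nonneg (sub_nonneg.2 hx) (sub_nonneg.2 hy)
  linarith

end

section

variable {K : Type*} [Field K] [LinearOrder K] [IsStrictOrderedRing K]

theorem le_four_of_half_le_of_mul_mul_le_one {x y v : K} (hx : 1 / 2 ≤ x) (hy : 1 / 2 ≤ y)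
    (hv : 0 ≤ v) (hxyv : x * y * v ≤ 1) : v ≤ 4 := by
  have hv_le : 1 / 2 * (1 / 2) * v ≤ x * y * v := by gcongr
  linarith

theorem mul_add_le_of_half_le_of_mul_mul_le_one {x y v : K} (hx : 1 / 2 ≤ x) (hy : 1 / 2 ≤ y)
    (hv : 0 ≤ v) (hxyv : x * y * v ≤ 1) : v * (x + y) ≤ 2 + v / 2 := by
  have hsum : v * (1 / 2 * (x + y)) ≤ v * (x * y + (1 / 2) ^ 2) :=
    mul_le_mul_of_nonneg_left (mul_add_le_mul_add_sq hx hy) hv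
  linarith

theorem add_add_div_four_le_two {x y v : K} (hx : 1 / 2 ≤ x) (hy : 1 / 2 ≤ y) (hv : 2 ≤ v)
    (hxyv : x * y * v ≤ 1) : x + y + v / 4 ≤ 2 := by
  have hv_pos : 0 < v := two_pos.trans_le hv
  have hv_four : v ≤ 4 := le_four_of_half_le_of_mul_mul_le_one hx hy hv_pos.le hxyv
  have hquad : 0 ≤ (v - 2) * (4 - v) := mul_nonneg (sub_nonneg.2 hv) (sub_nonneg.2 hv_four)
  refine le_of_mul_le_mul_left ?_ hv_pos
  calc v * (x + y + v / 4) = v * (x + y) + v ^ 2 / 4 := by ring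
    _ ≤ 2 + v / 2 + v ^ 2 / 4 := by
      gcongr
      exact mul_add_le_of_half_le_of_mul_mul_le_one hx hy hv_pos.le hxyv
    _ ≤ v * 2 := by linarith

theorem first_case_bound_general {a b c d : K} (hvol : |a * b * c| ≤ 1)
    (ha : 1 / 2 ≤ a ^ 2) (hb : 1 / 2 ≤ b ^ 2) (hdc : d ^ 2 ≤ c ^ 2)
    (hd : d ^ 2 ≤ a ^ 2 + b ^ 2 + c ^ 2 / 4) : d ^ 2 ≤ 2 := by
  rcases le_total (c ^ 2) 2 with hc | hc
  · exact hdc.trans hc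
  · have hvol_sq : a ^ 2 * b ^ 2 * c ^ 2 ≤ 1 := by
      rwa [← mul_pow, ← mul_pow, sq_le_one_iff_abs_le_one]
    exact hd.trans (add_add_div_four_le_two ha hb hc hvol_sq)

end

/-- If `abc = 1`, `a², b², c² ≥ 1/2`, `d² = a² + b² + c²/4` and `d = c`,
then `d² ≤ 2`. -/
theorem first_case_bound (a b c d : ℝ)
    (ha : 0 < a) (hb : 0 < b) (hc : 0 < c) (hd : 0 < d)
    (hvol : a * b * c = 1)
    (ha2 : 1 / 2 ≤ a ^ 2) (hb2 : 1 / 2 ≤ b ^ 2) (hc2 : 1 / 2 ≤ c ^ 2)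
    (hd2 : d ^ 2 = a ^ 2 + b ^ 2 + c ^ 2 / 4)
    (hdc : d = c) :
    d ^ 2 ≤ 2 :=
  first_case_bound_general (by rw [hvol, abs_one]) ha2 hb2 (by rw [hdc]) hd2.le
end
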